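/- arXiv:1706.09134 — 2 statements merged into one kernel-verified Lean document; each statement's English description precedes it below -/
import Mathlib

section
/- Let q ∈ k \ {0} be not a root of unity and let r = Σ_{i=1}^n Σ_{j=1}^{m_i} a_{i,j}/d_i^j be a (τ_{x,q}, σ_y)-reduced rational function, with a_{i,j} ∈ k(x)[y] and d_i ∈ k[x,y] irreducible in distinct (τ_{x,q}, σ_y)-orbits, deg_y(a_{i,j}) < deg_y(d_i). Then r is exact with respect to (Δ_{x,q}, Δ_y) if and only if for each multiplicity j, the rational function r_j = Σ_{i=1}^n a_{i,j}/d_i^j (summing over those i with j ≤ m_i) is exact with respect to (Δ_{x,q}, Δ_y). -/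
/-!
Let `K = k(x)`. Grade `k(x, y) = K(y)` by pole order: `K(y)` is the direct sum of `K[y]` and of the
groups of sums `∑ b / d ^ j` with `d ∈ K[y]` irreducible and `deg b < deg d`, one group for each
`j ≥ 1`, by existence and uniqueness of partial fractions. Both shifts restrict to automorphisms of
`K[y]` preserving the degree, hence permute the irreducible polynomials and respect this grading.
The exact functions therefore form a homogeneous subgroup, and by Gauss's lemma the `r_j` are the
homogeneous components of `r`.
-/

open Polynomial

noncomputable section

variable (k : Type*) [Field k] [CharZero k]

/-- `k(x,y)` realized as `k(x)(y)`: rational functions in `y` over `k(x) = RatFunc k`. -/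
abbrev F2 := RatFunc (RatFunc k)

/-- The element `x` of `k(x,y)`. -/
def Fx : F2 k := RatFunc.C RatFunc.X

/-- The element `y` of `k(x,y)`. -/
def Fy : F2 k := RatFunc.X

/-- The embedding of the constants `k` into `k(x,y)`. -/
def Fc : k →+* F2 k := RatFunc.C.comp RatFunc.C

/-- The embedding of `k(x)` into `k(x,y)`. -/
def FKx : RatFunc k →+* F2 k := RatFunc.C

/-- The embedding of `k(x)[y]` into `k(x,y)`. -/
def FP : Polynomial (RatFunc k) →+* F2 k := algebraMap _ _

/-- The embedding of `k[x,y]` (realized as `(k[x])[y]`, outer variable `y`) into `k(x)[y]`. -/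
def PP : Polynomial (Polynomial k) →+* Polynomial (RatFunc k) :=
  Polynomial.mapRingHom (algebraMap (Polynomial k) (RatFunc k))

/-- The embedding of `k[y]` into `k[x,y] = (k[x])[y]`. -/
def PY : Polynomial k →+* Polynomial (Polynomial k) :=
  Polynomial.mapRingHom Polynomial.C

/-- The embedding of `k[x,y]` into `k(x,y)`. -/
def FPP : Polynomial (Polynomial k) →+* F2 k := (FP k).comp (PP k)

/-- The embedding of `k[y]` into `k(x)[y]`. -/
def PYx : Polynomial k →+* Polynomial (RatFunc k) :=
  Polynomial.mapRingHom (algebraMap k (RatFunc k))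

variable {k}

/-- `σ` is the shift operator `σ_x : f(x,y) ↦ f(x+1,y)`, i.e. the automorphism of
`k(x,y)` fixing `k(y)` pointwise (equivalently, fixing the generators `k` and `y`)
and sending `x` to `x+1`. -/
def IsShiftX (σ : F2 k ≃+* F2 k) : Prop :=
  (∀ c : k, σ (Fc k c) = Fc k c) ∧ σ (Fy k) = Fy k ∧ σ (Fx k) = Fx k + 1

/-- `σ` is the `q`-shift operator `τ_{x,q} : f(x,y) ↦ f(qx,y)`, i.e. the automorphism of
`k(x,y)` fixing `k(y)` pointwise and sending `x` to `q·x`. -/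
def IsQShiftX (q : k) (σ : F2 k ≃+* F2 k) : Prop :=
  (∀ c : k, σ (Fc k c) = Fc k c) ∧ σ (Fy k) = Fy k ∧ σ (Fx k) = Fc k q * Fx k

/-- `σ` is the shift operator `σ_y : f(x,y) ↦ f(x,y+1)`, i.e. the automorphism of
`k(x,y)` fixing `k(x)` pointwise and sending `y` to `y+1`. -/
def IsShiftY (σ : F2 k ≃+* F2 k) : Prop :=
  (∀ c : k, σ (Fc k c) = Fc k c) ∧ σ (Fx k) = Fx k ∧ σ (Fy k) = Fy k + 1

/-- `D` is the partial derivation `D_y = ∂/∂y` on `k(x,y)`: the `k(x)`-linear derivation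
with `D(y) = 1`. -/
def IsDerivY (D : F2 k → F2 k) : Prop :=
  (∀ a b, D (a + b) = D a + D b) ∧ (∀ a b, D (a * b) = a * D b + D a * b) ∧
  (∀ c : RatFunc k, D (FKx k c) = 0) ∧ D (Fy k) = 1

/-- `q` is not a root of unity. -/
def NotRootOfUnity (q : k) : Prop := ∀ n : ℕ, 0 < n → q ^ n ≠ 1

section ExactSubgroup

variable {M : Type*} [AddCommGroup M]

/-- The elements of `M` that are exact with respect to the differences `φ - 1` and `ψ - 1`. -/
def exactSubgroup (φ ψ : M →+ M) : AddSubgroup M :=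
  (φ - AddMonoidHom.id M).range ⊔ (ψ - AddMonoidHom.id M).range

theorem mem_exactSubgroup {φ ψ : M →+ M} {f : M} :
    f ∈ exactSubgroup φ ψ ↔ ∃ u v, f = (φ u - u) + (ψ v - v) := by
  simp [exactSubgroup, AddSubgroup.mem_sup, eq_comm]

end ExactSubgroup

section Homogeneous

open DirectSum

variable {ι M σ : Type*} [DecidableEq ι] [AddCommGroup M] [SetLike σ M] [AddSubgroupClass σ M]
  {ℳ : ι → σ} [Decomposition ℳ]

theorem coe_decompose_map {φ : M →+ M} (hφ : ∀ i, ∀ f ∈ ℳ i, φ f ∈ ℳ i) (f : M) (i : ι) :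
    (decompose ℳ (φ f) i : M) = φ (decompose ℳ f i) := by
  induction f using Decomposition.inductionOn ℳ with
  | zero => simp
  | @homogeneous j f =>
    obtain rfl | hij := eq_or_ne j i
    · rw [decompose_of_mem_same ℳ (hφ j f f.2), decompose_of_mem_same ℳ f.2]
    · rw [decompose_of_mem_ne ℳ (hφ j f f.2) hij, decompose_of_mem_ne ℳ f.2 hij, map_zero]
  | add f g hf hg => simp [hf, hg]

theorem sum_mem_iff_of_isHomogeneous {κ : Type*} {p : AddSubgroup M}
    (hp : SetLike.IsHomogeneous ℳ p) {deg : κ → ι} (hdeg : Function.Injective deg) {R : κ → M}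
    (hR : ∀ j, R j ∈ ℳ (deg j)) (s : Finset κ) :
    ∑ j ∈ s, R j ∈ p ↔ ∀ j ∈ s, R j ∈ p := by
  refine ⟨fun h j hj => ?_, sum_mem⟩
  have hcomponent : (decompose ℳ (∑ i ∈ s, R i) (deg j) : M) = R j := by
    rw [decompose_sum, DFinsupp.finsetSum_apply, AddSubmonoidClass.coe_finsetSum,
      Finset.sum_eq_single_of_mem j hj, decompose_of_mem_same ℳ (hR j)]
    exact fun i _ hij => decompose_of_mem_ne ℳ (hR i) (hdeg.ne hij)
  exact hcomponent ▸ hp (deg j) h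

theorem isHomogeneous_exactSubgroup {φ ψ : M →+ M} (hφ : ∀ i, ∀ f ∈ ℳ i, φ f ∈ ℳ i)
    (hψ : ∀ i, ∀ f ∈ ℳ i, ψ f ∈ ℳ i) : SetLike.IsHomogeneous ℳ (exactSubgroup φ ψ) := by
  intro i f hf
  obtain ⟨u, v, rfl⟩ := mem_exactSubgroup.1 hf
  refine mem_exactSubgroup.2 ⟨decompose ℳ u i, decompose ℳ v i, ?_⟩
  simp [coe_decompose_map hφ, coe_decompose_map hψ]

end Homogeneous

theorem iSupIndep_iSup_fiber {α ι κ : Type*} [CompleteLattice α] [IsModularLattice α]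
    [IsCompactlyGenerated α] {A : ι → α} (hA : iSupIndep A) (f : ι → κ) :
    iSupIndep fun c => ⨆ i : {i // f i = c}, A i := by
  intro c
  have hdisj := hA.disjoint_biSup_biSup (s := {i | f i = c}) (t := {i | f i ≠ c})
    (Set.disjoint_left.2 fun _ h h' => h' h)
  refine hdisj.mono (iSup_le fun i => le_iSup₂_of_le i.1 i.2 le_rfl) ?_
  exact iSup₂_le fun b hb => iSup_le fun i => le_iSup₂_of_le i.1 (i.2.trans_ne hb) le_rfl

theorem sum_sum_range_eq_sum_range_sup {ι M : Type*} [Fintype ι] [AddCommMonoid M] (m : ι → ℕ)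
    (f : ι → ℕ → M) : ∑ i, ∑ j ∈ Finset.range (m i), f i j =
      ∑ j ∈ Finset.range (Finset.univ.sup m), ∑ i with j < m i, f i j := by
  refine Finset.sum_comm' fun i j => ?_
  simp only [Finset.mem_univ, Finset.mem_range, Finset.mem_filter, true_and]
  exact ⟨fun h => ⟨h, h.trans_le (Finset.le_sup (Finset.mem_univ i))⟩, And.left⟩

section PartialFractions

variable {K : Type*} [Field K]

variable (K) in
/-- The monic irreducible polynomials over `K`, which represent the finite places of `K(y)`. -/
abbrev MonicIrreducible := {d : K[X] // d.Monic ∧ Irreducible d}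

theorem isCoprime_of_monic_irreducible {d e : K[X]} (hd : d.Monic ∧ Irreducible d)
    (he : e.Monic ∧ Irreducible e) (h : d ≠ e) : IsCoprime d e :=
  (hd.2.isCoprime_or_dvd e).resolve_right fun hde =>
    h (eq_of_monic_of_associated hd.1 he.1 (hd.2.associated_of_dvd he.2 hde))

variable (K) in
/-- The summands of the partial fraction decomposition of `K(y)`: the index `none` stands for the
polynomials and `some (d, j)` for the fractions `b / d ^ (j + 1)` with `deg b < deg d`. -/
def partialFractionPart : Option (MonicIrreducible K × ℕ) → Submodule K (RatFunc K)
  | none => LinearMap.range (Algebra.linearMap K[X] (RatFunc K) |>.restrictScalars K)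
  | some (d, j) => (degreeLT K d.1.natDegree).map
      (LinearMap.mulRight K ((algebraMap K[X] (RatFunc K) d.1)⁻¹ ^ (j + 1)) ∘ₗ
        (Algebra.linearMap K[X] (RatFunc K)).restrictScalars K)

theorem mem_partialFractionPart_none {f : RatFunc K} :
    f ∈ partialFractionPart K none ↔ ∃ p : K[X], algebraMap K[X] (RatFunc K) p = f :=
  Iff.rfl

theorem mem_partialFractionPart_some {d : MonicIrreducible K} {j : ℕ} {f : RatFunc K} :
    f ∈ partialFractionPart K (some (d, j)) ↔ ∃ b : K[X], b.degree < d.1.degree ∧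
      algebraMap K[X] (RatFunc K) b * (algebraMap K[X] (RatFunc K) d.1)⁻¹ ^ (j + 1) = f := by
  simp [partialFractionPart, mem_degreeLT, degree_eq_natDegree d.2.2.ne_zero]

theorem eq_zero_of_sum_partialFractionPart_eq_zero {s : Finset (MonicIrreducible K)} {N : ℕ}
    {v : Option (MonicIrreducible K × ℕ) → RatFunc K} (hv : ∀ i, v i ∈ partialFractionPart K i)
    (h : ∑ i ∈ (s ×ˢ Finset.range N).insertNone, v i = 0) :
    ∀ i ∈ (s ×ˢ Finset.range N).insertNone, v i = 0 := by
  obtain ⟨p, hp⟩ := mem_partialFractionPart_none.1 (hv none)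
  choose b hb hbv using fun d j => mem_partialFractionPart_some.1 (hv (some (d, j)))
  have hsum : algebraMap K[X] (RatFunc K) p + ∑ d ∈ s, ∑ j : Fin N,
      algebraMap K[X] (RatFunc K) (b d j) * (algebraMap K[X] (RatFunc K) d.1)⁻¹ ^ (j.1 + 1) =
        0 := by
    simpa [Finset.sum_insertNone, Finset.sum_product, ← hp, ← hbv, Finset.sum_range] using h
  obtain ⟨hp0, hb0⟩ := quo_add_sum_rem_mul_pow_inverse_unique (K := RatFunc K) (s := s)
    (g := Subtype.val) (gi := fun d => (algebraMap K[X] (RatFunc K) d.1)⁻¹) (n := fun _ => N)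
    (q₁ := p) (q₂ := 0) (r₁ := fun d j => b d j) (r₂ := 0)
    (fun d _ => d.2.1)
    (fun d _ e _ hde => isCoprime_of_monic_irreducible d.2 e.2 (Subtype.coe_ne_coe.2 hde))
    (fun d _ => inv_mul_cancel₀ (RatFunc.algebraMap_ne_zero d.2.2.ne_zero))
    (fun d _ j => hb d j)
    (fun d _ _ => by simp [bot_lt_iff_ne_bot, d.2.2.ne_zero])
    (by simpa using hsum)
  rintro (_ | ⟨d, j⟩) hi
  · rw [← hp, hp0, map_zero]
  · obtain ⟨hd, hj⟩ : d ∈ s ∧ j < N := by simpa using hi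
    rw [← hbv, show b d j = 0 from congrFun (hb0 d hd) ⟨j, hj⟩, map_zero, zero_mul]

theorem iSupIndep_partialFractionPart : iSupIndep (partialFractionPart K) := by
  classical
  rw [iSupIndep_iff_finsetSum_eq_zero_imp_eq_zero]
  intro s v hv hsum
  set v' : Option (MonicIrreducible K × ℕ) → RatFunc K := fun i => if i ∈ s then v i else 0
  have hv' : ∀ i, v' i ∈ partialFractionPart K i := fun i => by
    by_cases hi : i ∈ s <;> simp [v', hi, hv]
  obtain ⟨N, hN⟩ := Finset.exists_nat_subset_range (s.eraseNone.image Prod.snd)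
  have hs : s ⊆ ((s.eraseNone.image Prod.fst) ×ˢ Finset.range N).insertNone := by
    refine fun i hi => Finset.mem_insertNone.2 fun x hx => ?_
    have hxs : x ∈ s.eraseNone := Finset.mem_eraseNone.2 (hx ▸ hi)
    exact Finset.mem_product.2
      ⟨Finset.mem_image_of_mem _ hxs, hN (Finset.mem_image_of_mem _ hxs)⟩
  have hsum' : ∑ i ∈ ((s.eraseNone.image Prod.fst) ×ˢ Finset.range N).insertNone, v' i = 0 := by
    rw [← Finset.sum_subset hs fun i _ hi => if_neg hi, ← hsum]
    exact Finset.sum_congr rfl fun i hi => if_pos hi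
  intro i hi
  rw [← show v' i = v i from if_pos hi]
  exact eq_zero_of_sum_partialFractionPart_eq_zero hv' hsum' i (hs hi)

theorem exists_eq_num_mul_prod_inv_pow (f : RatFunc K) :
    ∃ (s : Finset K[X]) (n : K[X] → ℕ), (∀ d ∈ s, d.Monic ∧ Irreducible d) ∧
      f = algebraMap K[X] (RatFunc K) f.num *
        ∏ d ∈ s, (algebraMap K[X] (RatFunc K) d)⁻¹ ^ n d := by
  classical
  let S := UniqueFactorizationMonoid.normalizedFactors f.denom
  refine ⟨S.toFinset, S.count, fun d hd => ?_, ?_⟩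
  · have hd := Multiset.mem_toFinset.1 hd
    have hirr := UniqueFactorizationMonoid.irreducible_of_normalized_factor d hd
    refine ⟨?_, hirr⟩
    rw [← UniqueFactorizationMonoid.normalize_normalized_factor d hd]
    exact monic_normalize hirr.ne_zero
  · have hdenom : ∏ d ∈ S.toFinset, d ^ S.count d = f.denom := by
      rw [← Finset.prod_multiset_count,
        UniqueFactorizationMonoid.prod_normalizedFactors_eq f.denom_ne_zero,
        f.monic_denom.normalize_eq_self]
    conv_lhs => rw [← f.num_div_denom, ← hdenom, map_prod, div_eq_mul_inv,
      ← Finset.prod_inv_distrib]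
    simp

theorem iSup_partialFractionPart : iSup (partialFractionPart K) = ⊤ := by
  refine eq_top_iff.2 fun f _ => ?_
  obtain ⟨s, n, hs, hf⟩ := exists_eq_num_mul_prod_inv_pow f
  obtain ⟨p, r, hr, hpr⟩ := mul_prod_pow_inverse_eq_quo_add_sum_rem_mul_pow_inverse
    (K := RatFunc K) (s := s) f.num (g := id) (fun d hd => (hs d hd).1)
    (fun d hd e he => isCoprime_of_monic_irreducible (hs d hd) (hs e he)) n
    (fun d hd => inv_mul_cancel₀ (RatFunc.algebraMap_ne_zero (hs d hd).2.ne_zero))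
  refine (hf.trans hpr) ▸ add_mem (Submodule.mem_iSup_of_mem none ⟨p, rfl⟩) ?_
  refine sum_mem fun d hd => sum_mem fun j _ =>
    Submodule.mem_iSup_of_mem (some (⟨d, hs d hd⟩, j.1)) ?_
  exact mem_partialFractionPart_some.2 ⟨r d j, hr d hd j, rfl⟩

/-- The pole order of the summand with index `i`, with value `0` on the polynomials. -/
def poleOrder : Option (MonicIrreducible K × ℕ) → ℕ
  | none => 0
  | some (_, j) => j + 1

variable (K) in
/-- The sums of fractions `b / d ^ n` with `d` irreducible and `deg b < deg d`; for `n = 0`, the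
polynomials. -/
def multiplicityPart (n : ℕ) : Submodule K (RatFunc K) :=
  ⨆ i : {i : Option (MonicIrreducible K × ℕ) // poleOrder i = n}, partialFractionPart K i

theorem isInternal_multiplicityPart : DirectSum.IsInternal (multiplicityPart K) := by
  refine DirectSum.isInternal_submodule_of_iSupIndep_of_iSup_eq_top
    (iSupIndep_iSup_fiber iSupIndep_partialFractionPart poleOrder) ?_
  rw [eq_top_iff, ← iSup_partialFractionPart]
  exact iSup_le fun i => le_iSup_of_le (poleOrder i) (le_iSup_of_le ⟨i, rfl⟩ le_rfl)

instance : DirectSum.Decomposition (multiplicityPart K) :=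
  isInternal_multiplicityPart.chooseDecomposition

theorem algebraMap_mem_multiplicityPart (p : K[X]) :
    algebraMap K[X] (RatFunc K) p ∈ multiplicityPart K 0 :=
  Submodule.mem_iSup_of_mem ⟨none, rfl⟩ ⟨p, rfl⟩

theorem div_pow_mem_multiplicityPart {b d : K[X]} (hd : Irreducible d) (hb : b.degree < d.degree)
    (j : ℕ) : algebraMap K[X] (RatFunc K) b / algebraMap K[X] (RatFunc K) d ^ (j + 1) ∈
      multiplicityPart K (j + 1) := by
  have hl : d.leadingCoeff⁻¹ ≠ 0 := inv_ne_zero (leadingCoeff_ne_zero.2 hd.ne_zero)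
  have hd' : Irreducible (d * C d.leadingCoeff⁻¹) :=
    (associated_mul_unit_right d _ (isUnit_C.2 hl.isUnit)).irreducible hd
  refine Submodule.mem_iSup_of_mem
    ⟨some (⟨_, monic_mul_leadingCoeff_inv hd.ne_zero, hd'⟩, j), rfl⟩
    (mem_partialFractionPart_some.2 ⟨b * C (d.leadingCoeff⁻¹ ^ (j + 1)), ?_, ?_⟩)
  · rwa [degree_mul_C (pow_ne_zero _ hl), degree_mul_C hl]
  · have hl' : algebraMap K[X] (RatFunc K) (C d.leadingCoeff⁻¹) ≠ 0 :=
      RatFunc.algebraMap_ne_zero (C_ne_zero.2 hl)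
    rw [map_mul, map_mul, C_pow, map_pow, inv_pow, mul_pow, ← div_eq_mul_inv,
      mul_div_mul_right _ _ (pow_ne_zero _ hl')]

/-- The endomorphism `φ` of `K(y)` restricts to an automorphism of `K[y]` preserving degrees. -/
def RestrictsToDegreePreservingAut (φ : RatFunc K →+* RatFunc K) : Prop :=
  ∃ e : K[X] ≃+* K[X], (∀ p, (e p).degree = p.degree) ∧
    ∀ p, φ (algebraMap K[X] (RatFunc K) p) = algebraMap K[X] (RatFunc K) (e p)

theorem map_mem_multiplicityPart {φ : RatFunc K →+* RatFunc K}
    (hφ : RestrictsToDegreePreservingAut φ) (n : ℕ) (f : RatFunc K)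
    (hf : f ∈ multiplicityPart K n) : φ f ∈ multiplicityPart K n := by
  obtain ⟨e, hdeg, he⟩ := hφ
  refine Submodule.iSup_induction _ (motive := fun f => φ f ∈ multiplicityPart K n) hf ?_ ?_ ?_
  · rintro ⟨_ | ⟨d, j⟩, rfl⟩ f hf
    · obtain ⟨p, rfl⟩ := mem_partialFractionPart_none.1 hf
      exact he p ▸ algebraMap_mem_multiplicityPart (e p)
    · obtain ⟨b, hb, rfl⟩ := mem_partialFractionPart_some.1 hf
      rw [inv_pow, ← div_eq_mul_inv, map_div₀, map_pow, he, he]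
      exact div_pow_mem_multiplicityPart ((MulEquiv.irreducible_iff e).2 d.2.2)
        (by rwa [hdeg, hdeg]) j
  · rw [map_zero]
    exact zero_mem _
  · exact fun f g hf hg => map_add φ f g ▸ add_mem hf hg

theorem restrictsToDegreePreservingAut_of_map_C_of_map_X {φ : RatFunc K →+* RatFunc K}
    (κ : K ≃+* K) (b : K) (hC : ∀ c, φ (RatFunc.C c) = RatFunc.C (κ c))
    (hX : φ RatFunc.X = RatFunc.X + RatFunc.C b) : RestrictsToDegreePreservingAut φ := by
  refine ⟨(mapEquiv κ).trans (taylorEquiv b).toRingEquiv, fun p => ?_, fun p => ?_⟩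
  · exact (degree_taylor _ b).trans (degree_map_eq_of_injective κ.injective p)
  · have hpoly : φ.comp (algebraMap K[X] (RatFunc K)) = (algebraMap K[X] (RatFunc K)).comp
        ((taylorAlgHom b : K[X] →+* K[X]).comp (mapRingHom (κ : K →+* K))) :=
      Polynomial.ringHom_ext (by simp [RatFunc.algebraMap_C, hC])
        (by simp [RatFunc.algebraMap_C, RatFunc.algebraMap_X, hX])
    exact RingHom.congr_fun hpoly p

theorem sum_exact_iff_forall_exact {φ ψ : RatFunc K →+* RatFunc K}
    (hφ : RestrictsToDegreePreservingAut φ) (hψ : RestrictsToDegreePreservingAut ψ)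
    {R : ℕ → RatFunc K} (hR : ∀ j, R j ∈ multiplicityPart K (j + 1)) (s : Finset ℕ) :
    (∃ u v, ∑ j ∈ s, R j = (φ u - u) + (ψ v - v)) ↔
      ∀ j ∈ s, ∃ u v, R j = (φ u - u) + (ψ v - v) := by
  have := sum_mem_iff_of_isHomogeneous
    (isHomogeneous_exactSubgroup (φ := (φ : RatFunc K →+ RatFunc K))
      (ψ := (ψ : RatFunc K →+ RatFunc K))
      (map_mem_multiplicityPart hφ) (map_mem_multiplicityPart hψ))
    (add_left_injective 1) hR s
  simpa only [mem_exactSubgroup, AddMonoidHom.coe_coe] using this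

end PartialFractions

section GaussLemma

variable {R K : Type*} [CommRing R] [IsDomain R] [IsGCDMonoid R] [Field K] [Algebra R K]
  [IsFractionRing R K]

theorem div_map_pow_mem_multiplicityPart {a : K[X]} {d : R[X]} (hd : Irreducible d)
    (ha : a.degree < d.degree) (j : ℕ) :
    algebraMap K[X] (RatFunc K) a /
      algebraMap K[X] (RatFunc K) (d.map (algebraMap R K)) ^ (j + 1) ∈
        multiplicityPart K (j + 1) := by
  by_cases hd0 : d.natDegree = 0
  · have ha0 : a = 0 := by
      rw [degree_eq_natDegree hd.ne_zero, hd0] at ha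
      exact degree_eq_bot.1 (Nat.WithBot.lt_zero_iff.1 (by simpa using ha))
    simp [ha0]
  · have hmap : Irreducible (d.map (algebraMap R K)) :=
      (hd.isPrimitive hd0).irreducible_iff_irreducible_map_fraction_map.1 hd
    refine div_pow_mem_multiplicityPart hmap ?_ j
    rwa [degree_map_eq_of_injective (IsFractionRing.injective R K)]

end GaussLemma

section Shifts

variable {k : Type*} [Field k]

theorem ringHom_eq_of_map_C_of_map_X {L : Type*} [Field L] {f g : RatFunc k →+* L}
    (hC : ∀ c, f (RatFunc.C c) = g (RatFunc.C c)) (hX : f RatFunc.X = g RatFunc.X) : f = g := by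
  have hpoly : f.comp (algebraMap k[X] (RatFunc k)) = g.comp (algebraMap k[X] (RatFunc k)) :=
    Polynomial.ringHom_ext (by simpa [RatFunc.algebraMap_C] using hC)
      (by simpa [RatFunc.algebraMap_X] using hX)
  exact IsFractionRing.ringHom_ext (A := k[X]) (RingHom.congr_fun hpoly)

theorem exists_ringEquiv_map_X_eq_C_mul_X {q : k} (hq : q ≠ 0) :
    ∃ κ : RatFunc k ≃+* RatFunc k,
      (∀ c, κ (RatFunc.C c) = RatFunc.C c) ∧ κ RatFunc.X = RatFunc.C q * RatFunc.X := by
  let := invertibleOfNonzero hq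
  refine ⟨IsFractionRing.ringEquivOfRingEquiv (algEquivCMulXAddC q 0).toRingEquiv,
    fun c => ?_, ?_⟩
  · rw [← RatFunc.algebraMap_C, IsFractionRing.ringEquivOfRingEquiv_algebraMap]
    simp
  · rw [← RatFunc.algebraMap_X, IsFractionRing.ringEquivOfRingEquiv_algebraMap]
    simp [RatFunc.algebraMap_C, RatFunc.algebraMap_X]

theorem IsShiftY.restrictsToDegreePreservingAut {σ : F2 k ≃+* F2 k} (hσ : IsShiftY σ) :
    RestrictsToDegreePreservingAut (σ : F2 k →+* F2 k) := by
  obtain ⟨hc, hx, hy⟩ := hσ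
  have hC : (σ : F2 k →+* F2 k).comp RatFunc.C = RatFunc.C :=
    ringHom_eq_of_map_C_of_map_X hc hx
  have hX : σ RatFunc.X = RatFunc.X + RatFunc.C 1 := by
    rw [map_one]
    exact hy
  exact restrictsToDegreePreservingAut_of_map_C_of_map_X (.refl _) 1 (RingHom.congr_fun hC) hX

theorem IsQShiftX.ne_zero {q : k} {τ : F2 k ≃+* F2 k} (hτ : IsQShiftX q τ) : q ≠ 0 := by
  rintro rfl
  have hx : τ (Fx k) = 0 := by rw [hτ.2.2, map_zero, zero_mul]
  exact (_root_.map_ne_zero RatFunc.C).2 RatFunc.X_ne_zero ((map_eq_zero τ).1 hx)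

theorem IsQShiftX.restrictsToDegreePreservingAut {q : k} {τ : F2 k ≃+* F2 k} (hτ : IsQShiftX q τ) :
    RestrictsToDegreePreservingAut (τ : F2 k →+* F2 k) := by
  obtain ⟨κ, hκC, hκX⟩ := exists_ringEquiv_map_X_eq_C_mul_X hτ.ne_zero
  obtain ⟨hc, hy, hx⟩ := hτ
  have hC : (τ : F2 k →+* F2 k).comp RatFunc.C = RatFunc.C.comp (κ : RatFunc k →+* RatFunc k) :=
    ringHom_eq_of_map_C_of_map_X
      (fun c => (hc c).trans (congrArg RatFunc.C (hκC c)).symm)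
      (hx.trans ((map_mul RatFunc.C _ _).symm.trans (congrArg RatFunc.C hκX).symm))
  have hX : τ RatFunc.X = RatFunc.X + RatFunc.C 0 := by
    rw [map_zero, add_zero]
    exact hy
  exact restrictsToDegreePreservingAut_of_map_C_of_map_X κ 0 (RingHom.congr_fun hC) hX

end Shifts

theorem stmt16_general {R K ι : Type*} [CommRing R] [IsDomain R] [IsGCDMonoid R] [Field K]
    [Algebra R K] [IsFractionRing R K] [Fintype ι] {φ ψ : RatFunc K →+* RatFunc K}
    (hφ : RestrictsToDegreePreservingAut φ) (hψ : RestrictsToDegreePreservingAut ψ) {m : ι → ℕ}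
    {a : ι → ℕ → K[X]} {d : ι → R[X]} (hd : ∀ i, Irreducible (d i))
    (hdeg : ∀ i j, j < m i → (a i j).degree < (d i).degree) {r : RatFunc K}
    (hr : r = ∑ i, ∑ j ∈ Finset.range (m i), algebraMap K[X] (RatFunc K) (a i j) /
      algebraMap K[X] (RatFunc K) ((d i).map (algebraMap R K)) ^ (j + 1)) :
    (∃ u v, r = (φ u - u) + (ψ v - v)) ↔ ∀ j, ∃ u v,
      ∑ i with j < m i, algebraMap K[X] (RatFunc K) (a i j) /
        algebraMap K[X] (RatFunc K) ((d i).map (algebraMap R K)) ^ (j + 1) =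
          (φ u - u) + (ψ v - v) := by
  rw [hr, sum_sum_range_eq_sum_range_sup, sum_exact_iff_forall_exact hφ hψ fun j =>
    sum_mem fun i hi => div_map_pow_mem_multiplicityPart (hd i)
      (hdeg i j (Finset.mem_filter.1 hi).2) j]
  refine ⟨fun h j => ?_, fun h j _ => h j⟩
  by_cases hj : j < Finset.univ.sup m
  · exact h j (Finset.mem_range.2 hj)
  · have hempty : Finset.univ.filter (fun i => j < m i) = ∅ :=
      Finset.filter_false_of_mem fun i hi h => hj (h.trans_le (Finset.le_sup hi))
    exact ⟨0, 0, by simp [hempty]⟩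

/-- let `q ∈ k \ {0}` not be a root of unity and let
`r = Σᵢ Σⱼ a_{i,j}/dᵢ^j` be `(τ_{x,q}, σ_y)`-reduced, with `a_{i,j} ∈ k(x)[y]`,
`dᵢ ∈ k[x,y]` irreducible in pairwise distinct `(τ_{x,q}, σ_y)`-orbits and
`deg_y(a_{i,j}) < deg_y(dᵢ)`. Then `r` is exact with respect to `(Δ_{x,q}, Δ_y)` iff for
each multiplicity `j`, the rational function `r_j = Σ_{i : j ≤ mᵢ} a_{i,j}/dᵢ^j` is exact
with respect to `(Δ_{x,q}, Δ_y)`. -/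
theorem stmt16 {k : Type*} [Field k] [CharZero k]
    (q : k) (hq : q ≠ 0) (hqru : NotRootOfUnity q)
    (τ : F2 k ≃+* F2 k) (hτ : IsQShiftX q τ)
    (σy : F2 k ≃+* F2 k) (hσy : IsShiftY σy)
    (n : ℕ) (m : Fin n → ℕ)
    (a : Fin n → ℕ → Polynomial (RatFunc k))
    (dd : Fin n → Polynomial (Polynomial k)) (hirr : ∀ i, Irreducible (dd i))
    (hdeg : ∀ i j, j < m i → (a i j).degree < (dd i).degree)
    (horb : ∀ i i' : Fin n, ∀ s t : ℤ,
      FPP k (dd i) = (τ ^ s) ((σy ^ t) (FPP k (dd i'))) → i = i')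
    (r : F2 k)
    (hr : r = ∑ i, ∑ j ∈ Finset.range (m i), FP k (a i j) / FPP k (dd i) ^ (j + 1)) :
    (∃ u v : F2 k, r = (τ u - u) + (σy v - v)) ↔
    (∀ j : ℕ, ∃ u v : F2 k,
      ∑ i ∈ Finset.univ.filter (fun i : Fin n => j < m i),
        FP k (a i j) / FPP k (dd i) ^ (j + 1) = (τ u - u) + (σy v - v)) := by
  exact stmt16_general hτ.restrictsToDegreePreservingAut hσy.restrictsToDegreePreservingAut
    hirr hdeg hr
end
end

section
/- The rational function 1/(x+y) ∈ k(x,y) is not exact with respect to (Δ_x, D_y): there do not exist g, h ∈ k(x,y) with 1/(x+y) = Δ_x(g) + D_y(h). -/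
/-!
For `f ∈ k(x)(y)` let `R f ∈ k(x)` be the sum over `a ∈ k` of the residues at `y = -x` of the
translates `f(x + a, y)`. The sum is finite: the residue of `f(x + a, y)` at `y = -x` is, up to the
substitution `x ↦ x + a`, the residue of `f` at `y = a - x`, and `f` has finitely many poles.

The map `R` is additive. It vanishes on derivatives `D_y h`, which have no residues, and it is
invariant under `f(x, y) ↦ f(x + 1, y)`, which only reindexes the sum; so it vanishes on every
`Δ_x g + D_y h`. But `R (1 / (x + y)) = 1`, since only `a = 0` contributes.
-/

open Polynomial

noncomputable section

variable (k : Type*) [Field k] [CharZero k]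

variable {k}

section RatFuncMaps

variable {K M : Type*} [Field K] [Field M]

theorem ratFunc_ringHom_ext {φ ψ : RatFunc K →+* M}
    (hC : ∀ c, φ (RatFunc.C c) = ψ (RatFunc.C c)) (hX : φ RatFunc.X = ψ RatFunc.X) : φ = ψ := by
  have hpoly : φ.comp (algebraMap K[X] (RatFunc K)) = ψ.comp (algebraMap K[X] (RatFunc K)) :=
    Polynomial.ringHom_ext (by simpa using hC) (by simpa using hX)
  exact IsFractionRing.ringHom_ext (A := K[X]) (RingHom.congr_fun hpoly)

theorem ratFunc_addMonoidHom_eq_zero_of_leibniz {φ : RatFunc K →+* M} {d : RatFunc K →+ M}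
    (leibniz : ∀ f g, d (f * g) = φ f * d g + φ g * d f)
    (hC : ∀ c, d (RatFunc.C c) = 0) (hX : d RatFunc.X = 0) : d = 0 := by
  have hpoly (p : K[X]) : d (algebraMap K[X] (RatFunc K) p) = 0 := by
    induction p using Polynomial.induction_on with
    | C c => rw [RatFunc.algebraMap_C, hC]
    | add p q hp hq => rw [map_add, map_add, hp, hq, add_zero]
    | monomial n c ih =>
      rw [pow_succ, ← mul_assoc, map_mul, leibniz, ih, RatFunc.algebraMap_X, hX, mul_zero,
        mul_zero, add_zero]
  ext f
  obtain ⟨p, q, hq, rfl⟩ := IsFractionRing.div_surjective K[X] f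
  have hq₀ : algebraMap K[X] (RatFunc K) q ≠ 0 :=
    RatFunc.algebraMap_ne_zero (nonZeroDivisors.ne_zero hq)
  have h := leibniz (algebraMap K[X] (RatFunc K) p / algebraMap K[X] (RatFunc K) q)
    (algebraMap K[X] (RatFunc K) q)
  rw [div_mul_cancel₀ _ hq₀, hpoly, hpoly, mul_zero, zero_add, eq_comm, mul_eq_zero] at h
  exact h.resolve_left ((map_ne_zero φ).2 hq₀)

end RatFuncMaps

section HahnSeriesMaps

variable {Γ R S : Type*} [AddCommMonoid Γ] [PartialOrder Γ] [IsOrderedCancelAddMonoid Γ]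

/-- The ring homomorphism `R⟦Γ⟧ → S⟦Γ⟧` applying a ring homomorphism to every coefficient. -/
def hahnSeriesMapRingHom [Semiring R] [Semiring S] (s : R →+* S) :
    HahnSeries Γ R →+* HahnSeries Γ S where
  toFun f := f.map s
  map_one' := HahnSeries.map_one s.toMonoidWithZeroHom
  map_mul' _ _ := HahnSeries.map_mul s.toNonUnitalRingHom
  map_zero' := HahnSeries.map_zero s.toZeroHom
  map_add' _ _ := HahnSeries.map_add s.toAddMonoidHom

theorem hahnSeriesMapRingHom_single [Semiring R] [Semiring S] (s : R →+* S) (n : Γ) (c : R) :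
    hahnSeriesMapRingHom s (HahnSeries.single n c) = HahnSeries.single n (s c) :=
  HahnSeries.map_single s.toZeroHom

theorem coeff_mul_of_weight [CommSemiring R] (w : Γ →+ R) {f g wf wg : HahnSeries Γ R}
    (hf : ∀ n, wf.coeff n = w n * f.coeff n) (hg : ∀ n, wg.coeff n = w n * g.coeff n) (n : Γ) :
    w n * (f * g).coeff n = (f * wg + g * wf).coeff n := by
  have hwf : wf.support ⊆ f.support := fun m hm =>
    right_ne_zero_of_mul (a := w m) (by rwa [← hf])
  have hwg : wg.support ⊆ g.support := fun m hm =>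
    right_ne_zero_of_mul (a := w m) (by rwa [← hg])
  rw [mul_comm g, HahnSeries.coeff_add, HahnSeries.coeff_mul_left' f.isPWO_support hwf,
    HahnSeries.coeff_mul_right' g.isPWO_support hwg, HahnSeries.coeff_mul,
    ← Finset.sum_add_distrib, Finset.mul_sum]
  refine Finset.sum_congr rfl fun ij hij => ?_
  rw [hf, hg, ← (Finset.mem_antidiagonal.1 hij).2.2, map_add]
  ring

/-- The derivation of `R⟦Γ⟧` attached to an additive weight `w` on the exponents: it sends `t ^ n`
to `w n * t ^ n`. On Laurent series, the weight `n ↦ n` gives the Euler operator `t * d/dt`. -/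
def weightDerivation [CommRing R] (w : Γ →+ R) :
    Derivation R (HahnSeries Γ R) (HahnSeries Γ R) :=
  Derivation.mk'
    { toFun f :=
        { coeff n := w n * f.coeff n
          isPWO_support' := f.isPWO_support.mono fun _ hn => right_ne_zero_of_mul hn }
      map_add' f g := by ext n; simp [mul_add]
      map_smul' c f := by ext n; simp [mul_left_comm] } fun f g => by
    ext n
    exact coeff_mul_of_weight w (fun _ => rfl) (fun _ => rfl) n

theorem coeff_weightDerivation [CommRing R] (w : Γ →+ R) (f : HahnSeries Γ R) (n : Γ) :
    (weightDerivation w f).coeff n = w n * f.coeff n :=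
  rfl

theorem weightDerivation_single [CommRing R] (w : Γ →+ R) (n : Γ) (c : R) :
    weightDerivation w (HahnSeries.single n c) = HahnSeries.single n (w n * c) := by
  ext m
  rw [coeff_weightDerivation]
  rcases eq_or_ne m n with rfl | hmn
  · rw [HahnSeries.coeff_single_same, HahnSeries.coeff_single_same]
  · rw [HahnSeries.coeff_single_of_ne hmn, HahnSeries.coeff_single_of_ne hmn, mul_zero]

end HahnSeriesMaps

section Residue

variable {K L : Type*} [Field K] [Field L]

/-- The expansion of a polynomial at `a`, as a Laurent series in the local parameter `X - a`. -/
def laurentExpansionPoly (a : K) : K[X] →+* LaurentSeries K :=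
  (HahnSeries.ofPowerSeries ℤ K).comp
    (Polynomial.coeToPowerSeries.ringHom.comp (Polynomial.taylorAlgHom a : K[X] →+* K[X]))

theorem laurentExpansionPoly_apply (a : K) (p : K[X]) :
    laurentExpansionPoly a p =
      HahnSeries.ofPowerSeries ℤ K (Polynomial.taylor a p : PowerSeries K) :=
  rfl

theorem laurentExpansionPoly_injective (a : K) : Function.Injective (laurentExpansionPoly a) :=
  HahnSeries.ofPowerSeries_injective.comp
    ((Polynomial.coe_injective K).comp (Polynomial.taylor_injective a))

/-- The Laurent expansion of a rational function at the point `a`, in the local parameter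
`X - a`. -/
def laurentExpansion (a : K) : RatFunc K →+* LaurentSeries K :=
  IsFractionRing.lift (laurentExpansionPoly_injective a)

theorem laurentExpansion_algebraMap (a : K) (p : K[X]) :
    laurentExpansion a (algebraMap K[X] (RatFunc K) p) = laurentExpansionPoly a p :=
  IsFractionRing.lift_algebraMap (laurentExpansionPoly_injective a) p

theorem laurentExpansion_C (a c : K) : laurentExpansion a (RatFunc.C c) = HahnSeries.C c := by
  rw [← RatFunc.algebraMap_C, laurentExpansion_algebraMap, laurentExpansionPoly_apply,
    Polynomial.taylor_C, Polynomial.coe_C, HahnSeries.ofPowerSeries_C]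

theorem laurentExpansion_X (a : K) :
    laurentExpansion a RatFunc.X = HahnSeries.single 1 1 + HahnSeries.C a := by
  rw [← RatFunc.algebraMap_X, laurentExpansion_algebraMap, laurentExpansionPoly_apply,
    Polynomial.taylor_X, Polynomial.coe_add, Polynomial.coe_X, Polynomial.coe_C, map_add,
    HahnSeries.ofPowerSeries_X, HahnSeries.ofPowerSeries_C]

theorem laurentExpansion_X_sub_C (a : K) :
    laurentExpansion a (RatFunc.X - RatFunc.C a) = HahnSeries.single 1 1 := by
  rw [map_sub, laurentExpansion_X, laurentExpansion_C, add_sub_cancel_right]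

theorem laurentExpansion_map {s : K →+* L} {φ : RatFunc K →+* RatFunc L}
    (hC : ∀ c, φ (RatFunc.C c) = RatFunc.C (s c)) (hX : φ RatFunc.X = RatFunc.X) (a : K)
    (f : RatFunc K) :
    laurentExpansion (s a) (φ f) = hahnSeriesMapRingHom s (laurentExpansion a f) := by
  have h : (laurentExpansion (s a)).comp φ =
      (hahnSeriesMapRingHom s).comp (laurentExpansion a) := by
    refine ratFunc_ringHom_ext (fun c => ?_) ?_
    · simp [hC, laurentExpansion_C, hahnSeriesMapRingHom_single]
    · simp [hX, laurentExpansion_X, hahnSeriesMapRingHom_single]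
  exact RingHom.congr_fun h f

theorem weightDerivation_laurentExpansion {D : Derivation K (RatFunc K) (RatFunc K)}
    (hD : D RatFunc.X = 1) (a : K) (f : RatFunc K) :
    weightDerivation (Int.castAddHom K) (laurentExpansion a f) =
      laurentExpansion a ((RatFunc.X - RatFunc.C a) * D f) := by
  let d : RatFunc K →+ LaurentSeries K := AddMonoidHom.mk'
    (fun f => weightDerivation (Int.castAddHom K) (laurentExpansion a f) -
      laurentExpansion a ((RatFunc.X - RatFunc.C a) * D f))
    fun f g => by simp only [map_add, mul_add]; ring
  have hd (f : RatFunc K) : d f = weightDerivation (Int.castAddHom K) (laurentExpansion a f) -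
      laurentExpansion a ((RatFunc.X - RatFunc.C a) * D f) := rfl
  suffices d = 0 from sub_eq_zero.1 (DFunLike.congr_fun this f)
  refine ratFunc_addMonoidHom_eq_zero_of_leibniz (φ := laurentExpansion a)
    (fun f g => ?_) (fun c => ?_) ?_
  · simp only [hd, map_mul, Derivation.leibniz, smul_eq_mul, map_add]
    ring
  · have hDc : D (RatFunc.C c) = 0 := D.map_algebraMap c
    rw [hd, hDc, laurentExpansion_C, HahnSeries.C_apply, weightDerivation_single]
    simp
  · rw [hd, hD, mul_one, laurentExpansion_X_sub_C, laurentExpansion_X, map_add,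
      HahnSeries.C_apply, weightDerivation_single, weightDerivation_single]
    simp

/-- The residue of a rational function at the point `a`: the coefficient of `(X - a)⁻¹` in its
Laurent expansion there. -/
def residue (a : K) : RatFunc K →+ K :=
  (HahnSeries.coeff.addMonoidHom (-1)).comp (laurentExpansion a).toAddMonoidHom

theorem residue_apply (a : K) (f : RatFunc K) : residue a f = (laurentExpansion a f).coeff (-1) :=
  rfl

theorem residue_derivation {D : Derivation K (RatFunc K) (RatFunc K)} (hD : D RatFunc.X = 1)
    (a : K) (f : RatFunc K) : residue a (D f) = 0 := by
  -- `(X - a) * D` acts on expansions as `t * d/dt`, which kills the constant term; the constant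
  -- term of the expansion of `(X - a) * D f` is the residue of `D f`.
  have h := congrArg (HahnSeries.coeff · 0) (weightDerivation_laurentExpansion hD a f)
  simp only [map_mul, laurentExpansion_X_sub_C, HahnSeries.coeff_single_mul] at h
  simpa [residue_apply, weightDerivation] using h.symm

theorem residue_map {s : K →+* L} {φ : RatFunc K →+* RatFunc L}
    (hC : ∀ c, φ (RatFunc.C c) = RatFunc.C (s c)) (hX : φ RatFunc.X = RatFunc.X) (a : K)
    (f : RatFunc K) : residue (s a) (φ f) = s (residue a f) := by
  rw [residue_apply, laurentExpansion_map hC hX]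
  rfl

theorem residue_div_eq_zero {a : K} (p : K[X]) {q : K[X]} (hq : q.eval a ≠ 0) :
    residue a (algebraMap K[X] (RatFunc K) p / algebraMap K[X] (RatFunc K) q) = 0 := by
  let P : PowerSeries K := Polynomial.taylor a p
  let Q : PowerSeries K := Polynomial.taylor a q
  have hQ : PowerSeries.constantCoeff Q ≠ 0 := by
    rwa [← PowerSeries.coeff_zero_eq_constantCoeff_apply, Polynomial.coeff_coe,
      Polynomial.taylor_coeff_zero]
  have hinv : (HahnSeries.ofPowerSeries ℤ K Q)⁻¹ = HahnSeries.ofPowerSeries ℤ K Q⁻¹ :=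
    inv_eq_of_mul_eq_one_right (by rw [← map_mul, PowerSeries.mul_inv_cancel Q hQ, map_one])
  have hexp : laurentExpansion a (algebraMap K[X] (RatFunc K) p / algebraMap K[X] (RatFunc K) q) =
      HahnSeries.ofPowerSeries ℤ K (P * Q⁻¹) := by
    rw [map_div₀, laurentExpansion_algebraMap, laurentExpansion_algebraMap,
      laurentExpansionPoly_apply, laurentExpansionPoly_apply, div_eq_mul_inv, hinv, map_mul]
  rw [residue_apply, hexp, PowerSeries.coeff_coe, if_pos (by norm_num)]

theorem finite_residue_support (f : RatFunc K) : (fun a => residue a f).support.Finite := by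
  refine (Polynomial.finite_setOfPred_isRoot f.denom_ne_zero).subset fun a ha => ?_
  contrapose! ha
  rw [Function.notMem_support, ← f.num_div_denom]
  exact residue_div_eq_zero f.num ha

theorem residue_inv_X_sub_C_self (a : K) : residue a (RatFunc.X - RatFunc.C a)⁻¹ = 1 := by
  rw [residue_apply, map_inv₀, laurentExpansion_X_sub_C]
  simp

theorem residue_inv_X_sub_C_of_ne {a b : K} (h : a ≠ b) :
    residue a (RatFunc.X - RatFunc.C b)⁻¹ = 0 := by
  have heval : (Polynomial.X - Polynomial.C b).eval a ≠ 0 := by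
    rwa [Polynomial.eval_sub, Polynomial.eval_X, Polynomial.eval_C, sub_ne_zero]
  have hres := residue_div_eq_zero 1 heval
  rwa [map_one, one_div, map_sub, RatFunc.algebraMap_X, RatFunc.algebraMap_C] at hres

end Residue

section TranslationX

variable {k : Type*} [Field k]

/-- The endomorphism `f(x) ↦ f(x + c)` of `k(x)`. -/
def translation (c : k) : RatFunc k →+* RatFunc k :=
  IsFractionRing.map (A := k[X]) (B := k[X]) (j := (Polynomial.taylorAlgHom c : k[X] →+* k[X]))
    (Polynomial.taylor_injective c)

theorem translation_algebraMap (c : k) (p : k[X]) :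
    translation c (algebraMap k[X] (RatFunc k) p) =
      algebraMap k[X] (RatFunc k) (Polynomial.taylor c p) :=
  IsLocalization.map_eq
    (nonZeroDivisors_le_comap_nonZeroDivisors_of_injective
      (Polynomial.taylorAlgHom c : k[X] →+* k[X]) (Polynomial.taylor_injective c)) p

theorem translation_C (c a : k) : translation c (RatFunc.C a) = RatFunc.C a := by
  rw [← RatFunc.algebraMap_C, translation_algebraMap, Polynomial.taylor_C]

theorem translation_X (c : k) : translation c RatFunc.X = RatFunc.X + RatFunc.C c := by
  rw [← RatFunc.algebraMap_X, translation_algebraMap, Polynomial.taylor_X, map_add,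
    RatFunc.algebraMap_X, RatFunc.algebraMap_C]

theorem translation_translation (b c : k) (f : RatFunc k) :
    translation c (translation b f) = translation (c + b) f := by
  have h : (translation c).comp (translation b) = translation (c + b) := by
    refine ratFunc_ringHom_ext (fun a => ?_) ?_
    · simp [translation_C]
    · simp [translation_X, translation_C, add_assoc]
  exact RingHom.congr_fun h f

/-- `τ` is the translation `f(x, y) ↦ f(x + c, y)` of `k(x, y)`. -/
def IsTranslationX (c : k) (τ : F2 k →+* F2 k) : Prop :=
  (∀ a : k, τ (Fc k a) = Fc k a) ∧ τ (Fy k) = Fy k ∧ τ (Fx k) = Fx k + Fc k c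

theorem IsShiftX.isTranslationX {σ : F2 k ≃+* F2 k} (hσ : IsShiftX σ) :
    IsTranslationX 1 (σ : F2 k →+* F2 k) :=
  ⟨hσ.1, hσ.2.1, by simpa using hσ.2.2⟩

theorem IsTranslationX.map_C {c : k} {τ : F2 k →+* F2 k} (hτ : IsTranslationX c τ)
    (u : RatFunc k) : τ (RatFunc.C u) = RatFunc.C (translation c u) := by
  have h : τ.comp RatFunc.C = RatFunc.C.comp (translation c) := by
    refine ratFunc_ringHom_ext (fun a => ?_) ?_
    · simpa [translation_C] using! hτ.1 a
    · simpa [translation_X] using! hτ.2.2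
  exact RingHom.congr_fun h u

theorem IsTranslationX.residue_eq_translation {c : k} {τ : F2 k →+* F2 k} (hτ : IsTranslationX c τ)
    (a : k) (f : F2 k) :
    residue (RatFunc.C a - RatFunc.X) (τ f) =
      translation c (residue (RatFunc.C (a + c) - RatFunc.X) f) := by
  have hpoint : translation c (RatFunc.C (a + c) - RatFunc.X) = RatFunc.C a - RatFunc.X := by
    rw [map_sub, translation_C, translation_X, map_add]
    ring
  rw [← hpoint, residue_map hτ.map_C hτ.2.1]

theorem finite_translation_residue_support (f : F2 k) :
    (fun a : k => translation a (residue (RatFunc.C a - RatFunc.X) f)).support.Finite := by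
  have hinj : Function.Injective fun a : k => RatFunc.C a - RatFunc.X :=
    (sub_left_injective (b := RatFunc.X)).comp RatFunc.C_injective
  refine ((finite_residue_support f).preimage hinj.injOn).subset fun a ha hres => ha ?_
  simp only at hres ⊢
  rw [hres, map_zero]

/-- The sum over `a : k` of the residues at `x + y = 0` of the translates `f(x + a, y)`. Each such
residue is encoded as the translate by `a` of the residue of `f` at `y = a - x`. -/
def translationResidue : F2 k →+ RatFunc k :=
  AddMonoidHom.mk' (fun f => ∑ᶠ a : k, translation a (residue (RatFunc.C a - RatFunc.X) f))
    fun f g => by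
      simp only [map_add]
      exact finsum_add_distrib (finite_translation_residue_support f)
        (finite_translation_residue_support g)

theorem translationResidue_apply (f : F2 k) :
    translationResidue f = ∑ᶠ a : k, translation a (residue (RatFunc.C a - RatFunc.X) f) :=
  rfl

theorem IsTranslationX.translationResidue_map {c : k} {τ : F2 k →+* F2 k}
    (hτ : IsTranslationX c τ) (f : F2 k) : translationResidue (τ f) = translationResidue f := by
  simp only [translationResidue_apply, hτ.residue_eq_translation, translation_translation]
  exact finsum_comp_equiv (Equiv.addRight c)
    (f := fun a => translation a (residue (RatFunc.C a - RatFunc.X) f))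

/-- The map `D_y`, as a derivation of `k(x)(y)` over `k(x)`. -/
def IsDerivY.toDerivation {D : F2 k → F2 k} (hD : IsDerivY D) :
    Derivation (RatFunc k) (F2 k) (F2 k) :=
  Derivation.mk'
    { toFun := D
      map_add' := hD.1
      map_smul' c f := by
        have hc : D (RatFunc.C c) = 0 := hD.2.2.1 c
        simp [RatFunc.smul_eq_C_mul, hD.2.1, hc] } fun f g => by
    simp [hD.2.1, mul_comm]

theorem IsDerivY.translationResidue_eq_zero {D : F2 k → F2 k} (hD : IsDerivY D) (h : F2 k) :
    translationResidue (D h) = 0 := by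
  have hres (a : RatFunc k) : residue a (D h) = 0 :=
    residue_derivation (D := hD.toDerivation) hD.2.2.2 a h
  simp [translationResidue_apply, hres]

theorem translationResidue_inv_Fx_add_Fy : translationResidue (Fx k + Fy k)⁻¹ = 1 := by
  have hsub : Fx k + Fy k = RatFunc.X - RatFunc.C (RatFunc.C (0 : k) - RatFunc.X) := by
    simp [Fx, Fy, add_comm]
  rw [translationResidue_apply, finsum_eq_single _ 0, hsub, residue_inv_X_sub_C_self, map_one]
  intro a ha
  rw [hsub, residue_inv_X_sub_C_of_ne, map_zero]
  simpa [sub_left_inj] using ha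

end TranslationX

theorem stmt17_general {k : Type*} [Field k] {c : k} {τ : F2 k →+* F2 k}
    (hτ : IsTranslationX c τ) {Dy : F2 k → F2 k} (hDy : IsDerivY Dy) :
    ¬ ∃ g h : F2 k, (Fx k + Fy k)⁻¹ = (τ g - g) + Dy h := by
  rintro ⟨g, h, heq⟩
  have hsum : (1 : RatFunc k) = 0 :=
    calc (1 : RatFunc k)
      _ = translationResidue (Fx k + Fy k)⁻¹ := translationResidue_inv_Fx_add_Fy.symm
      _ = translationResidue (τ g) - translationResidue g + translationResidue (Dy h) := by
        rw [heq, map_add, map_sub]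
      _ = 0 := by
        rw [hτ.translationResidue_map, hDy.translationResidue_eq_zero, sub_self, add_zero]
  exact one_ne_zero hsum

/-- Example 1, first part: the rational function `1/(x+y)` is not exact
with respect to `(Δ_x, D_y)`: there are no `g, h ∈ k(x,y)` with
`1/(x+y) = Δ_x(g) + D_y(h)`. -/
theorem stmt17 {k : Type*} [Field k] [CharZero k]
    (σx : F2 k ≃+* F2 k) (hσx : IsShiftX σx)
    (Dy : F2 k → F2 k) (hDy : IsDerivY Dy) :
    ¬ ∃ g h : F2 k, (Fx k + Fy k)⁻¹ = (σx g - g) + Dy h := by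
  exact stmt17_general hσx.isTranslationX hDy
end
end
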